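/- arXiv:1303.3651 — 3 statements merged into one kernel-verified Lean document; each statement's English description precedes it below -/
import Mathlib

section
/- Suppose E_i ≤ E_max for all i ≥ 2. For P ≥ 0 let f(P) be the supremum of the total throughput Σ_{i=1}^N (T_f/2)·log₂(1 + γ_i p_i) over allocations (p, p_H) with 0 ≤ p_{H,i} ≤ p_i satisfying Causality, Capacity, and the average grid-power constraint (1/N)·Σ_{i=1}^N (p_i − p_{H,i}) ≤ P. Then f is strictly increasing: for all 0 ≤ P₁ < P₂, if the suprema defining f(P₁) and f(P₂) are attained by feasible allocations, then f(P₁) < f(P₂). -/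
/-!
Frames are indexed by `i ∈ {1, …, N}` (we use functions `ℕ → ℝ`, with only the
coordinates in `Finset.Icc 1 N` relevant).  The rate of frame `i` under power `p i`
is `Tf / 2 * logb 2 (1 + γ i * p i)`.
-/

/-- Rate of frame `i`. -/
noncomputable def rate (Tf : ℝ) (γ p : ℕ → ℝ) (i : ℕ) : ℝ :=
  Tf / 2 * Real.logb 2 (1 + γ i * p i)

/-- `0 ≤ p_{H,i} ≤ p_i` for all frames. -/
def Alloc (N : ℕ) (p pH : ℕ → ℝ) : Prop :=
  ∀ i ∈ Finset.Icc 1 N, 0 ≤ pH i ∧ pH i ≤ p i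

/-- Energy causality: `Σ_{i=1}^k T_f p_{H,i} ≤ Σ_{i=1}^k E_i` for `k = 1, …, N`. -/
def Causality (N : ℕ) (Tf : ℝ) (E pH : ℕ → ℝ) : Prop :=
  ∀ k ∈ Finset.Icc 1 N, ∑ i ∈ Finset.Icc 1 k, Tf * pH i ≤ ∑ i ∈ Finset.Icc 1 k, E i

/-- Battery capacity: `Σ_{i=1}^{k+1} E_i − Σ_{i=1}^k T_f p_{H,i} ≤ E_max` for
`k = 1, …, N−1`. -/
def Capacity (N : ℕ) (Tf Emax : ℝ) (E pH : ℕ → ℝ) : Prop :=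
  ∀ k ∈ Finset.Icc 1 (N - 1),
    (∑ i ∈ Finset.Icc 1 (k + 1), E i) - ∑ i ∈ Finset.Icc 1 k, Tf * pH i ≤ Emax

/-!
A constant `δ` added to every grid power raises the average by exactly `δ` and leaves the battery
constraints untouched. It raises the throughput by an amount that, since the rates are concave,
decreases in the powers; as these are bounded on the feasible set, the gain is bounded below by a
positive constant, and the suprema differ by at least that constant. Spending every `E i` on arrival
is feasible with no grid power, so the suprema are over nonempty sets.
-/

/-- The total throughput `Σ_{i=1}^N (T_f/2) log₂(1 + γ_i p_i)` of a power vector. -/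
noncomputable def throughput (N : ℕ) (Tf : ℝ) (γ p : ℕ → ℝ) : ℝ :=
  ∑ i ∈ Finset.Icc 1 N, rate Tf γ p i

/-- `(p, pH)` is an allocation that satisfies all constraints of the throughput maximization
problem with average grid power at most `P`. -/
structure IsFeasible (N : ℕ) (Tf Emax : ℝ) (E : ℕ → ℝ) (P : ℝ) (p pH : ℕ → ℝ) : Prop where
  alloc : Alloc N p pH
  causality : Causality N Tf E pH
  capacity : Capacity N Tf Emax E pH
  grid_le : (1 / (N : ℝ)) * ∑ i ∈ Finset.Icc 1 N, (p i - pH i) ≤ P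

/-- The throughputs of the allocations that are feasible with average grid power at most `P`. -/
def feasibleThroughputs (N : ℕ) (Tf Emax : ℝ) (γ E : ℕ → ℝ) (P : ℝ) : Set ℝ :=
  {t | ∃ p pH, IsFeasible N Tf Emax E P p pH ∧ t = throughput N Tf γ p}

/-- The optimal value `f(P)` of the throughput maximization problem, as a function of the average
grid power `P`. It has the junk value `0` if the problem is infeasible or unbounded. -/
noncomputable def maxThroughput (N : ℕ) (Tf Emax : ℝ) (γ E : ℕ → ℝ) (P : ℝ) : ℝ :=
  sSup (feasibleThroughputs N Tf Emax γ E P)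

theorem maxThroughput_eq_sSup (N : ℕ) (Tf Emax : ℝ) (γ E : ℕ → ℝ) (P : ℝ) :
    maxThroughput N Tf Emax γ E P = sSup {t : ℝ | ∃ p pH : ℕ → ℝ,
      Alloc N p pH ∧ Causality N Tf E pH ∧ Capacity N Tf Emax E pH ∧
      (1 / (N : ℝ)) * ∑ i ∈ Finset.Icc 1 N, (p i - pH i) ≤ P ∧
      t = ∑ i ∈ Finset.Icc 1 N, rate Tf γ p i} := by
  refine congrArg sSup (Set.ext fun t => exists₂_congr fun p pH => ?_)
  exact ⟨fun ⟨⟨hA, hC, hK, hG⟩, ht⟩ => ⟨hA, hC, hK, hG, ht⟩,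
    fun ⟨hA, hC, hK, hG, ht⟩ => ⟨⟨hA, hC, hK, hG⟩, ht⟩⟩

section ThroughputMaximization

variable {N i : ℕ} {Tf Emax P δ : ℝ} {γ E p q pH d : ℕ → ℝ}

theorem rate_le_rate (hTf : 0 ≤ Tf) (hγ : 0 ≤ γ i) (hp : 0 ≤ p i) (hpq : p i ≤ q i) :
    rate Tf γ p i ≤ rate Tf γ q i := by
  unfold rate
  gcongr
  norm_num

theorem rate_lt_rate (hTf : 0 < Tf) (hγ : 0 < γ i) (hp : 0 ≤ p i) (hpq : p i < q i) :
    rate Tf γ p i < rate Tf γ q i := by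
  unfold rate
  gcongr
  norm_num

theorem rate_add_sub_rate_le (hTf : 0 ≤ Tf) (hγ : 0 ≤ γ i) (hp : 0 ≤ p i) (hpq : p i ≤ q i)
    (hd : 0 ≤ d i) :
    rate Tf γ (q + d) i - rate Tf γ q i ≤ rate Tf γ (p + d) i - rate Tf γ p i := by
  have hq : 0 ≤ q i := hp.trans hpq
  have one_add_pos {x : ℝ} (hx : 0 ≤ x) : 0 < 1 + γ i * x := by positivity
  have hp' := one_add_pos hp
  have hq' := one_add_pos hq
  have hpd := one_add_pos (add_nonneg hp hd)
  have hqd := one_add_pos (add_nonneg hq hd)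
  have snr_ratio_le : (1 + γ i * (q i + d i)) / (1 + γ i * q i) ≤
      (1 + γ i * (p i + d i)) / (1 + γ i * p i) := by
    have hdiff : 0 ≤ γ i * d i * (γ i * (q i - p i)) := by
      have := sub_nonneg.2 hpq
      positivity
    rw [div_le_div_iff₀ hq' hp']
    linarith
  simp only [rate, Pi.add_apply]
  rw [← mul_sub, ← mul_sub, ← Real.logb_div hqd.ne' hq'.ne', ← Real.logb_div hpd.ne' hp'.ne']
  gcongr
  norm_num

theorem throughput_le_throughput (hTf : 0 ≤ Tf) (hγ : ∀ i ∈ Finset.Icc 1 N, 0 ≤ γ i)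
    (hp : ∀ i ∈ Finset.Icc 1 N, 0 ≤ p i) (hpq : ∀ i ∈ Finset.Icc 1 N, p i ≤ q i) :
    throughput N Tf γ p ≤ throughput N Tf γ q :=
  Finset.sum_le_sum fun i hi => rate_le_rate hTf (hγ i hi) (hp i hi) (hpq i hi)

theorem throughput_lt_throughput (hN : 1 ≤ N) (hTf : 0 < Tf)
    (hγ : ∀ i ∈ Finset.Icc 1 N, 0 < γ i) (hp : ∀ i ∈ Finset.Icc 1 N, 0 ≤ p i)
    (hpq : ∀ i ∈ Finset.Icc 1 N, p i < q i) :
    throughput N Tf γ p < throughput N Tf γ q :=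
  Finset.sum_lt_sum_of_nonempty (Finset.nonempty_Icc.2 hN) fun i hi =>
    rate_lt_rate hTf (hγ i hi) (hp i hi) (hpq i hi)

theorem throughput_add_sub_throughput_le (hTf : 0 ≤ Tf) (hγ : ∀ i ∈ Finset.Icc 1 N, 0 ≤ γ i)
    (hp : ∀ i ∈ Finset.Icc 1 N, 0 ≤ p i) (hpq : ∀ i ∈ Finset.Icc 1 N, p i ≤ q i)
    (hd : ∀ i ∈ Finset.Icc 1 N, 0 ≤ d i) :
    throughput N Tf γ (q + d) - throughput N Tf γ q ≤
      throughput N Tf γ (p + d) - throughput N Tf γ p := by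
  simp only [throughput, ← Finset.sum_sub_distrib]
  exact Finset.sum_le_sum fun i hi =>
    rate_add_sub_rate_le hTf (hγ i hi) (hp i hi) (hpq i hi) (hd i hi)

theorem Alloc.power_nonneg (h : Alloc N p pH) (hi : i ∈ Finset.Icc 1 N) : 0 ≤ p i :=
  (h i hi).1.trans (h i hi).2

theorem Causality.harvested_le (h : Causality N Tf E pH) (hTf : 0 < Tf)
    (hpH : ∀ i ∈ Finset.Icc 1 N, 0 ≤ pH i) (hi : i ∈ Finset.Icc 1 N) :
    pH i ≤ (∑ j ∈ Finset.Icc 1 N, E j) / Tf := by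
  have hN : N ∈ Finset.Icc 1 N := Finset.right_mem_Icc.2 (Finset.nonempty_Icc.1 ⟨i, hi⟩)
  rw [le_div_iff₀' hTf]
  calc Tf * pH i ≤ ∑ j ∈ Finset.Icc 1 N, Tf * pH j :=
        Finset.single_le_sum (f := fun j => Tf * pH j)
          (fun j hj => mul_nonneg hTf.le (hpH j hj)) hi
    _ ≤ ∑ j ∈ Finset.Icc 1 N, E j := h N hN

namespace IsFeasible

theorem grid_power_le (h : IsFeasible N Tf Emax E P p pH) (hi : i ∈ Finset.Icc 1 N) :
    p i - pH i ≤ N * P := by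
  have hN : (0 : ℝ) < N := Nat.cast_pos.2 (Finset.nonempty_Icc.1 ⟨i, hi⟩)
  calc p i - pH i ≤ ∑ j ∈ Finset.Icc 1 N, (p j - pH j) :=
        Finset.single_le_sum (f := fun j => p j - pH j)
          (fun j hj => sub_nonneg.2 (h.alloc j hj).2) hi
    _ ≤ N * P := by simpa only [one_div, inv_mul_le_iff₀ hN] using h.grid_le

theorem power_le (h : IsFeasible N Tf Emax E P p pH) (hTf : 0 < Tf) (hi : i ∈ Finset.Icc 1 N) :
    p i ≤ N * P + (∑ j ∈ Finset.Icc 1 N, E j) / Tf := by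
  have hgrid := h.grid_power_le hi
  have hharvested := h.causality.harvested_le hTf (fun j hj => (h.alloc j hj).1) hi
  linarith

theorem add_grid_power (h : IsFeasible N Tf Emax E P p pH) (hd : ∀ i ∈ Finset.Icc 1 N, 0 ≤ d i) :
    IsFeasible N Tf Emax E (P + (1 / (N : ℝ)) * ∑ i ∈ Finset.Icc 1 N, d i) (p + d) pH where
  alloc i hi := ⟨(h.alloc i hi).1, le_add_of_le_of_nonneg (h.alloc i hi).2 (hd i hi)⟩
  causality := h.causality
  capacity := h.capacity
  grid_le := by
    simp only [Pi.add_apply, add_sub_right_comm, Finset.sum_add_distrib, mul_add]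
    gcongr
    exact h.grid_le

theorem add_const_grid_power (h : IsFeasible N Tf Emax E P p pH) (hN : 1 ≤ N) (hδ : 0 ≤ δ) :
    IsFeasible N Tf Emax E (P + δ) (p + fun _ => δ) pH := by
  have hN' : (N : ℝ) ≠ 0 := Nat.cast_ne_zero.2 (Nat.one_le_iff_ne_zero.1 hN)
  have haverage : (1 / (N : ℝ)) * ∑ _i ∈ Finset.Icc 1 N, δ = δ := by
    simp [hN']
  simpa only [haverage] using h.add_grid_power fun _ _ => hδ

end IsFeasible

theorem isFeasible_spend_on_arrival (hTf : 0 < Tf) (hE : ∀ i ∈ Finset.Icc 1 N, 0 ≤ E i)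
    (hEcap : ∀ i ∈ Finset.Icc 2 N, E i ≤ Emax) (hP : 0 ≤ P) :
    IsFeasible N Tf Emax E P (fun i => E i / Tf) (fun i => E i / Tf) where
  alloc i hi := ⟨div_nonneg (hE i hi) hTf.le, le_rfl⟩
  causality k _ := by simp only [mul_div_cancel₀ _ hTf.ne', le_refl]
  capacity k hk := by
    have hk' : k + 1 ∈ Finset.Icc 2 N := by
      rw [Finset.mem_Icc] at hk ⊢
      lia
    simpa only [mul_div_cancel₀ _ hTf.ne', Finset.sum_Icc_succ_top (Nat.le_add_left 1 k),
      add_sub_cancel_left] using hEcap (k + 1) hk'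
  grid_le := by simpa only [sub_self, Finset.sum_const_zero, mul_zero] using hP

theorem bddAbove_feasibleThroughputs (hTf : 0 < Tf) (hγ : ∀ i ∈ Finset.Icc 1 N, 0 ≤ γ i) (P : ℝ) :
    BddAbove (feasibleThroughputs N Tf Emax γ E P) := by
  refine ⟨throughput N Tf γ fun _ => N * P + (∑ j ∈ Finset.Icc 1 N, E j) / Tf, ?_⟩
  rintro _ ⟨p, pH, h, rfl⟩
  exact throughput_le_throughput hTf.le hγ (fun _ hi => h.alloc.power_nonneg hi)
    fun _ hi => h.power_le hTf hi

theorem IsFeasible.throughput_le_maxThroughput (h : IsFeasible N Tf Emax E P p pH) (hTf : 0 < Tf)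
    (hγ : ∀ i ∈ Finset.Icc 1 N, 0 ≤ γ i) :
    throughput N Tf γ p ≤ maxThroughput N Tf Emax γ E P :=
  le_csSup (bddAbove_feasibleThroughputs hTf hγ P) ⟨p, pH, h, rfl⟩

theorem maxThroughput_lt_maxThroughput_add (hN : 1 ≤ N) (hTf : 0 < Tf)
    (hγ : ∀ i ∈ Finset.Icc 1 N, 0 < γ i)
    (hne : (feasibleThroughputs N Tf Emax γ E P).Nonempty) (hδ : 0 < δ) :
    maxThroughput N Tf Emax γ E P < maxThroughput N Tf Emax γ E (P + δ) := by
  have hγ₀ i (hi : i ∈ Finset.Icc 1 N) : 0 ≤ γ i := (hγ i hi).le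
  let bound : ℕ → ℝ := fun _ => N * P + (∑ j ∈ Finset.Icc 1 N, E j) / Tf
  let shift : ℕ → ℝ := fun _ => δ
  have bound_nonneg : ∀ i ∈ Finset.Icc 1 N, 0 ≤ bound i := fun i hi => by
    obtain ⟨_, p, pH, h, -⟩ := hne
    exact (h.alloc.power_nonneg hi).trans (h.power_le hTf hi)
  have gain_pos : 0 < throughput N Tf γ (bound + shift) - throughput N Tf γ bound :=
    sub_pos.2 <| throughput_lt_throughput hN hTf hγ bound_nonneg fun i _ =>
      lt_add_of_pos_right (bound i) hδ
  refine (csSup_le hne ?_).trans_lt (sub_lt_self _ gain_pos)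
  rintro _ ⟨p, pH, h, rfl⟩
  have gain_le : throughput N Tf γ (bound + shift) - throughput N Tf γ bound ≤
      throughput N Tf γ (p + shift) - throughput N Tf γ p :=
    throughput_add_sub_throughput_le hTf.le hγ₀ (fun _ hi => h.alloc.power_nonneg hi)
      (fun _ hi => h.power_le hTf hi) fun _ _ => hδ.le
  have shifted_le : throughput N Tf γ (p + shift) ≤ maxThroughput N Tf Emax γ E (P + δ) :=
    (h.add_const_grid_power hN hδ.le).throughput_le_maxThroughput hTf hγ₀
  linarith

theorem statement_1_general (hN : 1 ≤ N) (hTf : 0 < Tf) (hγ : ∀ i ∈ Finset.Icc 1 N, 0 < γ i)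
    (hE : ∀ i ∈ Finset.Icc 1 N, 0 ≤ E i) (hEcap : ∀ i ∈ Finset.Icc 2 N, E i ≤ Emax) :
    StrictMonoOn (maxThroughput N Tf Emax γ E) (Set.Ici 0) := by
  intro P₁ hP₁ P₂ _ hP₁₂
  have hne : (feasibleThroughputs N Tf Emax γ E P₁).Nonempty :=
    ⟨_, _, _, isFeasible_spend_on_arrival hTf hE hEcap hP₁, rfl⟩
  simpa only [add_sub_cancel] using
    maxThroughput_lt_maxThroughput_add hN hTf hγ hne (sub_pos.2 hP₁₂)

end ThroughputMaximization

/-- the maximal throughput `f` is strictly increasing in the average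
grid power budget `P`, whenever the defining suprema are attained. -/
theorem statement_1
    (N : ℕ) (hN : 1 ≤ N) (Tf : ℝ) (hTf : 0 < Tf)
    (γ E : ℕ → ℝ) (Emax : ℝ) (hEmax : 0 ≤ Emax)
    (hγ : ∀ i ∈ Finset.Icc 1 N, 0 < γ i)
    (hE : ∀ i ∈ Finset.Icc 1 N, 0 ≤ E i)
    (hEcap : ∀ i ∈ Finset.Icc 2 N, E i ≤ Emax)
    (f : ℝ → ℝ)
    (hf : ∀ P : ℝ, f P = sSup {t : ℝ | ∃ p pH : ℕ → ℝ,
      Alloc N p pH ∧ Causality N Tf E pH ∧ Capacity N Tf Emax E pH ∧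
      (1 / (N : ℝ)) * ∑ i ∈ Finset.Icc 1 N, (p i - pH i) ≤ P ∧
      t = ∑ i ∈ Finset.Icc 1 N, rate Tf γ p i})
    (P₁ P₂ : ℝ) (hP₁ : 0 ≤ P₁) (hP₁₂ : P₁ < P₂)
    (hatt₁ : f P₁ ∈ {t : ℝ | ∃ p pH : ℕ → ℝ,
      Alloc N p pH ∧ Causality N Tf E pH ∧ Capacity N Tf Emax E pH ∧
      (1 / (N : ℝ)) * ∑ i ∈ Finset.Icc 1 N, (p i - pH i) ≤ P₁ ∧
      t = ∑ i ∈ Finset.Icc 1 N, rate Tf γ p i})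
    (hatt₂ : f P₂ ∈ {t : ℝ | ∃ p pH : ℕ → ℝ,
      Alloc N p pH ∧ Causality N Tf E pH ∧ Capacity N Tf Emax E pH ∧
      (1 / (N : ℝ)) * ∑ i ∈ Finset.Icc 1 N, (p i - pH i) ≤ P₂ ∧
      t = ∑ i ∈ Finset.Icc 1 N, rate Tf γ p i}) :
    f P₁ < f P₂ := by
  rw [hf, hf, ← maxThroughput_eq_sSup, ← maxThroughput_eq_sSup]
  exact statement_1_general hN hTf hγ hE hEcap hP₁ (hP₁.trans hP₁₂.le) hP₁₂
end

section
/- Suppose E_i ≤ E_max for all i ≥ 2. For P ≥ 0 let f(P) be the supremum of Σ_{i=1}^N (T_f/2)·log₂(1 + γ_i p_i) over allocations (p, p_H) with 0 ≤ p_{H,i} ≤ p_i satisfying Causality, Capacity, and (1/N)·Σ_{i=1}^N (p_i − p_{H,i}) ≤ P; for b ≥ 0 let g(b) be the infimum of (1/N)·Σ_{i=1}^N (p_i − p_{H,i}) over allocations with 0 ≤ p_{H,i} ≤ p_i satisfying Causality, Capacity, and Σ_{i=1}^N (T_f/2)·log₂(1 + γ_i p_i) ≥ b. For every b with b ≥ f(0),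 if the infimum defining g(b) and the supremum defining f(g(b)) are attained by feasible allocations, then f(g(b)) = b. -/
/-!
Cutting the external part `p − p_H` of an allocation by a factor `θ ∈ [0, 1]` keeps the allocation
feasible and multiplies its external power by `θ`. Since `x ↦ log (1 + γ x)` is `γ`-Lipschitz on
`[0, ∞)`, the rate drops by at most a constant times the external power saved, so the optimal rate
`f` is Lipschitz, in particular continuous, on `[0, ∞)`. A budget `0 ≤ P < g b` does not allow a
rate `b`, so `f P ≤ b`, whereas `f P ≥ b` for `P > g b`; let `P` tend to `g b` from both sides.
The left-hand limit is not available when `g b = 0`, where `f 0 ≤ b` takes its place.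
-/

open Filter Set Topology
open scoped NNReal

section Duality

variable {α β ρ : Type*} [ConditionallyCompleteLinearOrder β] [ConditionallyCompleteLinearOrder ρ]

/-- The optimal reward within a budget: the supremum of `r` over the points of `S` of cost `c` at
most `P`. It is meaningful only if these points exist and their rewards are bounded above. -/
noncomputable def maxReward (S : Set α) (c : α → β) (r : α → ρ) (P : β) : ρ :=
  sSup (r '' {x ∈ S | c x ≤ P})

/-- The least cost of a prescribed reward: the infimum of `c` over the points of `S` of reward `r`
at least `b`. It is meaningful only if these points exist and their costs are bounded below. -/
noncomputable def minCost (S : Set α) (c : α → β) (r : α → ρ) (b : ρ) : β :=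
  sInf (c '' {x ∈ S | b ≤ r x})

variable {S : Set α} {c : α → β} {r : α → ρ} {a P : β} {b : ρ}

theorem maxReward_le_of_lt_minCost (hc : ∀ x ∈ S, a ≤ c x) (hP : ∃ x ∈ S, c x ≤ P)
    (h : P < minCost S c r b) : maxReward S c r P ≤ b := by
  obtain ⟨x₀, hx₀, hx₀P⟩ := hP
  refine csSup_le ⟨r x₀, mem_image_of_mem r ⟨hx₀, hx₀P⟩⟩ ?_
  rintro _ ⟨x, ⟨hx, hxP⟩, rfl⟩
  by_contra! hbx
  have hcost : minCost S c r b ≤ c x :=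
    csInf_le ⟨a, forall_mem_image.2 fun y hy ↦ hc y hy.1⟩ (mem_image_of_mem c ⟨hx, hbx.le⟩)
  exact (h.trans_le hcost).not_ge hxP

theorem le_maxReward_of_minCost_lt (hbdd : BddAbove (r '' {x ∈ S | c x ≤ P}))
    (hb : ∃ x ∈ S, b ≤ r x) (h : minCost S c r b < P) : b ≤ maxReward S c r P := by
  obtain ⟨_, ⟨x, ⟨hx, hbx⟩, rfl⟩, hxP⟩ := exists_lt_of_csInf_lt (Set.Nonempty.image c hb) h
  exact hbx.trans (le_csSup hbdd (mem_image_of_mem r ⟨hx, hxP.le⟩))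

theorem maxReward_minCost_eq [TopologicalSpace β] [OrderTopology β] [DenselyOrdered β]
    [NoMaxOrder β] [TopologicalSpace ρ] [OrderClosedTopology ρ]
    (hc : ∀ x ∈ S, a ≤ c x) (ha : ∃ x ∈ S, c x ≤ a)
    (hbdd : ∀ P, BddAbove (r '' {x ∈ S | c x ≤ P})) (hcont : ContinuousOn (maxReward S c r) (Ici a))
    (hab : maxReward S c r a ≤ b) (hb : ∃ x ∈ S, b ≤ r x) :
    maxReward S c r (minCost S c r b) = b := by
  have ham : a ≤ minCost S c r b :=
    le_csInf (Set.Nonempty.image c hb) (forall_mem_image.2 fun x hx ↦ hc x hx.1)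
  have hcont' := hcont _ ham
  apply le_antisymm
  · rcases ham.eq_or_lt with heq | hlt
    · rwa [← heq]
    have := nhdsLT_neBot_of_exists_lt ⟨a, hlt⟩
    have hIco : Ico a (minCost S c r b) ∈ 𝓝[<] minCost S c r b := Ico_mem_nhdsLT hlt
    refine le_of_tendsto (hcont'.mono_left (nhdsWithin_le_iff.2
      (mem_of_superset hIco fun P hP ↦ hP.1))) ?_
    filter_upwards [hIco] with P hP
    exact maxReward_le_of_lt_minCost hc (ha.imp fun x hx ↦ ⟨hx.1, hx.2.trans hP.1⟩) hP.2
  · refine ge_of_tendsto (hcont'.mono_left (nhdsWithin_mono _ (Ioi_subset_Ici ham))) ?_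
    filter_upwards [self_mem_nhdsWithin] with P hP
    exact le_maxReward_of_minCost_lt (hbdd P) hb hP

end Duality

theorem lipschitzOnWith_maxReward {α : Type*} {S : Set α} {c r : α → ℝ} {a : ℝ} {K : ℝ≥0}
    (ha : ∃ x ∈ S, c x ≤ a) (hbdd : ∀ P, BddAbove (r '' {x ∈ S | c x ≤ P}))
    (hcut : ∀ x ∈ S, ∀ Q ∈ Icc a (c x), ∃ y ∈ S, c y ≤ Q ∧ r x ≤ r y + K * (c x - Q)) :
    LipschitzOnWith K (maxReward S c r) (Ici a) := by
  obtain ⟨x₀, hx₀, hx₀a⟩ := ha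
  refine LipschitzOnWith.of_le_add_mul K fun P hP Q hQ ↦ ?_
  refine csSup_le ⟨r x₀, mem_image_of_mem r ⟨hx₀, hx₀a.trans hP⟩⟩ ?_
  rintro _ ⟨x, ⟨hx, hxP⟩, rfl⟩
  have le_maxReward {y : α} (hy : y ∈ S) (hyQ : c y ≤ Q) : r y ≤ maxReward S c r Q :=
    le_csSup (hbdd Q) (mem_image_of_mem r ⟨hy, hyQ⟩)
  rcases le_total (c x) Q with hxQ | hQx
  · exact (le_maxReward hx hxQ).trans (le_add_of_nonneg_right (by positivity))
  · obtain ⟨y, hy, hyQ, hxy⟩ := hcut x hx Q ⟨hQ, hQx⟩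
    have hdist : c x - Q ≤ dist P Q := (sub_le_sub_right hxP Q).trans (le_abs_self _)
    calc r x ≤ r y + K * (c x - Q) := hxy
      _ ≤ maxReward S c r Q + K * dist P Q := by gcongr; exact le_maxReward hy hyQ

theorem log_one_add_mul_le {a x y : ℝ} (ha : 0 ≤ a) (hx : 0 ≤ x) (hxy : x ≤ y) :
    Real.log (1 + a * y) ≤ Real.log (1 + a * x) + a * (y - x) := by
  have hpos : 0 < 1 + a * x := by positivity
  have hpos' : 0 < 1 + a * y := by have := hx.trans hxy; positivity
  rw [← sub_le_iff_le_add', ← Real.log_div hpos'.ne' hpos.ne']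
  calc Real.log ((1 + a * y) / (1 + a * x))
      ≤ (1 + a * y) / (1 + a * x) - 1 := Real.log_le_sub_one_of_pos (by positivity)
    _ = a * (y - x) / (1 + a * x) := by field_simp; ring
    _ ≤ a * (y - x) :=
      div_le_self (mul_nonneg ha (sub_nonneg.2 hxy)) (le_add_of_nonneg_right (by positivity))

section Rate

/-- The Lipschitz constant of the rate of frame `i` as a function of its nonnegative
power. -/
noncomputable def rateSlope (Tf : ℝ) (γ : ℕ → ℝ) (i : ℕ) : ℝ :=
  Tf / 2 * (γ i / Real.log 2)

/-- The total rate of the frames `1, …, N` under the power vector `p`. -/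
noncomputable def sumRate (N : ℕ) (Tf : ℝ) (γ p : ℕ → ℝ) : ℝ :=
  ∑ i ∈ Finset.Icc 1 N, rate Tf γ p i

variable {N i : ℕ} {Tf : ℝ} {γ p q : ℕ → ℝ}

theorem rate_nonneg (hTf : 0 ≤ Tf) (hγ : 0 ≤ γ i) (hp : 0 ≤ p i) : 0 ≤ rate Tf γ p i :=
  mul_nonneg (by positivity)
    (Real.logb_nonneg one_lt_two (le_add_of_nonneg_right (mul_nonneg hγ hp)))

theorem rateSlope_nonneg (hTf : 0 ≤ Tf) (hγ : 0 ≤ γ i) : 0 ≤ rateSlope Tf γ i :=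
  mul_nonneg (by positivity) (div_nonneg hγ (Real.log_nonneg one_le_two))

theorem sum_rateSlope_nonneg (hTf : 0 ≤ Tf) (hγ : ∀ i ∈ Finset.Icc 1 N, 0 ≤ γ i) :
    0 ≤ ∑ i ∈ Finset.Icc 1 N, rateSlope Tf γ i :=
  Finset.sum_nonneg fun i hi ↦ rateSlope_nonneg hTf (hγ i hi)

theorem rate_le_rate_add (hTf : 0 ≤ Tf) (hγ : 0 ≤ γ i) (hq : 0 ≤ q i) (hqp : q i ≤ p i) :
    rate Tf γ p i ≤ rate Tf γ q i + rateSlope Tf γ i * (p i - q i) := by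
  calc rate Tf γ p i
      ≤ Tf / 2 * ((Real.log (1 + γ i * q i) + γ i * (p i - q i)) / Real.log 2) := by
        unfold rate Real.logb
        gcongr
        exact log_one_add_mul_le hγ hq hqp
    _ = rate Tf γ q i + rateSlope Tf γ i * (p i - q i) := by
        unfold rate rateSlope Real.logb
        ring

theorem sumRate_le_sumRate_add (hTf : 0 ≤ Tf) (hγ : ∀ i ∈ Finset.Icc 1 N, 0 ≤ γ i)
    (hq : ∀ i ∈ Finset.Icc 1 N, 0 ≤ q i) (hqp : ∀ i ∈ Finset.Icc 1 N, q i ≤ p i) :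
    sumRate N Tf γ p ≤ sumRate N Tf γ q +
      (∑ i ∈ Finset.Icc 1 N, rateSlope Tf γ i) * ∑ i ∈ Finset.Icc 1 N, (p i - q i) := by
  unfold sumRate
  rw [Finset.mul_sum, ← Finset.sum_add_distrib]
  refine Finset.sum_le_sum fun i hi ↦ (rate_le_rate_add hTf (hγ i hi) (hq i hi) (hqp i hi)).trans ?_
  have hslope : rateSlope Tf γ i ≤ ∑ j ∈ Finset.Icc 1 N, rateSlope Tf γ j :=
    Finset.single_le_sum (fun j hj ↦ rateSlope_nonneg hTf (hγ j hj)) hi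
  gcongr
  exact sub_nonneg.2 (hqp i hi)

theorem tendsto_rate_add_atTop (hTf : 0 < Tf) (hγ : 0 < γ i) :
    Tendsto (fun t : ℝ ↦ rate Tf γ (fun j ↦ p j + t) i) atTop atTop := by
  have hpower : Tendsto (fun t : ℝ ↦ p i + t) atTop atTop :=
    tendsto_atTop_add_const_left _ _ tendsto_id
  exact ((Real.tendsto_logb_atTop one_lt_two).comp
    (tendsto_atTop_add_const_left _ 1 (hpower.const_mul_atTop hγ))).const_mul_atTop (half_pos hTf)

theorem tendsto_sumRate_add_atTop (hN : 1 ≤ N) (hTf : 0 < Tf) (hγ : ∀ i ∈ Finset.Icc 1 N, 0 < γ i)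
    (hp : ∀ i ∈ Finset.Icc 1 N, 0 ≤ p i) :
    Tendsto (fun t : ℝ ↦ sumRate N Tf γ fun j ↦ p j + t) atTop atTop := by
  have h1 : 1 ∈ Finset.Icc 1 N := Finset.left_mem_Icc.2 hN
  refine tendsto_atTop_mono' _ ?_ (tendsto_rate_add_atTop (p := p) hTf (hγ 1 h1))
  filter_upwards [eventually_ge_atTop 0] with t ht
  exact Finset.single_le_sum (f := rate Tf γ fun j ↦ p j + t)
    (fun i hi ↦ rate_nonneg hTf.le (hγ i hi).le (add_nonneg (hp i hi) ht)) h1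

end Rate

section Allocation

/-- The feasible allocations, as pairs `(p, p_H)`. -/
def feasibleAllocs (N : ℕ) (Tf Emax : ℝ) (E : ℕ → ℝ) : Set ((ℕ → ℝ) × (ℕ → ℝ)) :=
  {x | Alloc N x.1 x.2 ∧ Causality N Tf E x.2 ∧ Capacity N Tf Emax E x.2}

/-- The average power that the allocation `x = (p, p_H)` draws from the external source, i.e. not
from the harvested energy. -/
noncomputable def externalPower (N : ℕ) (x : (ℕ → ℝ) × (ℕ → ℝ)) : ℝ :=
  (1 / (N : ℝ)) * ∑ i ∈ Finset.Icc 1 N, (x.1 i - x.2 i)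

/-- The allocation `x = (p, p_H)` with its external part `p - p_H` multiplied by `θ`. -/
def scaleExternal (θ : ℝ) (x : (ℕ → ℝ) × (ℕ → ℝ)) : (ℕ → ℝ) × (ℕ → ℝ) :=
  (fun i ↦ x.2 i + θ * (x.1 i - x.2 i), x.2)

variable {N : ℕ} {Tf Emax : ℝ} {γ E : ℕ → ℝ} {x : (ℕ → ℝ) × (ℕ → ℝ)} {θ : ℝ}

theorem Alloc.nonneg {p pH : ℕ → ℝ} (h : Alloc N p pH) : ∀ i ∈ Finset.Icc 1 N, 0 ≤ p i :=
  fun i hi ↦ (h i hi).1.trans (h i hi).2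

theorem Alloc.externalPower_nonneg (hx : Alloc N x.1 x.2) : 0 ≤ externalPower N x :=
  mul_nonneg (by positivity) (Finset.sum_nonneg fun i hi ↦ sub_nonneg.2 (hx i hi).2)

theorem mul_externalPower (hN : 1 ≤ N) :
    N * externalPower N x = ∑ i ∈ Finset.Icc 1 N, (x.1 i - x.2 i) := by
  have : (N : ℝ) ≠ 0 := by positivity
  unfold externalPower
  field_simp

theorem scaleExternal_mem_feasibleAllocs (hx : x ∈ feasibleAllocs N Tf Emax E) (hθ : 0 ≤ θ) :
    scaleExternal θ x ∈ feasibleAllocs N Tf Emax E :=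
  ⟨fun i hi ↦ ⟨(hx.1 i hi).1,
    le_add_of_nonneg_right (mul_nonneg hθ (sub_nonneg.2 (hx.1 i hi).2))⟩, hx.2⟩

theorem externalPower_scaleExternal :
    externalPower N (scaleExternal θ x) = θ * externalPower N x := by
  simp only [externalPower, scaleExternal, add_sub_cancel_left, ← Finset.mul_sum]
  ring

theorem Alloc.sumRate_le_sumRate_scaleExternal_add (hx : Alloc N x.1 x.2) (hN : 1 ≤ N)
    (hTf : 0 ≤ Tf) (hγ : ∀ i ∈ Finset.Icc 1 N, 0 ≤ γ i) (hθ₀ : 0 ≤ θ) (hθ₁ : θ ≤ 1) :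
    sumRate N Tf γ x.1 ≤ sumRate N Tf γ (scaleExternal θ x).1 +
      (∑ i ∈ Finset.Icc 1 N, rateSlope Tf γ i) * N * ((1 - θ) * externalPower N x) := by
  have hext (i) (hi : i ∈ Finset.Icc 1 N) : 0 ≤ x.1 i - x.2 i := sub_nonneg.2 (hx i hi).2
  have hsaved : ∑ i ∈ Finset.Icc 1 N, (x.1 i - (scaleExternal θ x).1 i) =
      N * ((1 - θ) * externalPower N x) := by
    rw [mul_left_comm, mul_externalPower hN, Finset.mul_sum]
    exact Finset.sum_congr rfl fun i _ ↦ by unfold scaleExternal; ring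
  rw [mul_assoc, ← hsaved]
  refine sumRate_le_sumRate_add hTf hγ
    (fun i hi ↦ add_nonneg (hx i hi).1 (mul_nonneg hθ₀ (hext i hi))) fun i hi ↦ ?_
  exact le_sub_iff_add_le'.1 (mul_le_of_le_one_left (hext i hi) hθ₁)

theorem exists_externalPower_le_sumRate_le (hN : 1 ≤ N) (hTf : 0 ≤ Tf)
    (hγ : ∀ i ∈ Finset.Icc 1 N, 0 ≤ γ i) (hx : x ∈ feasibleAllocs N Tf Emax E) {Q : ℝ}
    (hQ : Q ∈ Set.Icc 0 (externalPower N x)) :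
    ∃ y ∈ feasibleAllocs N Tf Emax E, externalPower N y ≤ Q ∧ sumRate N Tf γ x.1 ≤
      sumRate N Tf γ y.1 +
        (∑ i ∈ Finset.Icc 1 N, rateSlope Tf γ i) * N * (externalPower N x - Q) := by
  have hP : 0 ≤ externalPower N x := hQ.1.trans hQ.2
  have hθP : Q / externalPower N x * externalPower N x = Q :=
    div_mul_cancel_of_imp fun h ↦ le_antisymm (h ▸ hQ.2) hQ.1
  have hθ₀ : 0 ≤ Q / externalPower N x := div_nonneg hQ.1 hP
  refine ⟨_, scaleExternal_mem_feasibleAllocs hx hθ₀,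
    (externalPower_scaleExternal.trans hθP).le, ?_⟩
  have hrate := hx.1.sumRate_le_sumRate_scaleExternal_add hN hTf hγ hθ₀ (div_le_one_of_le₀ hQ.2 hP)
  rwa [one_sub_mul, hθP] at hrate

theorem sumRate_le_of_externalPower_le (hN : 1 ≤ N) (hTf : 0 < Tf)
    (hγ : ∀ i ∈ Finset.Icc 1 N, 0 ≤ γ i) (hx : x ∈ feasibleAllocs N Tf Emax E) {P : ℝ}
    (hP : externalPower N x ≤ P) :
    sumRate N Tf γ x.1 ≤ (∑ i ∈ Finset.Icc 1 N, rateSlope Tf γ i) *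
      (N * P + (∑ i ∈ Finset.Icc 1 N, E i) / Tf) := by
  have hharvest : ∑ i ∈ Finset.Icc 1 N, x.2 i ≤ (∑ i ∈ Finset.Icc 1 N, E i) / Tf := by
    rw [le_div_iff₀' hTf, Finset.mul_sum]
    exact hx.2.1 N (Finset.right_mem_Icc.2 hN)
  have hexternal : ∑ i ∈ Finset.Icc 1 N, (x.1 i - x.2 i) ≤ N * P := by
    rw [← mul_externalPower hN]
    gcongr
  have hslope := sum_rateSlope_nonneg hTf.le hγ
  calc sumRate N Tf γ x.1
      ≤ (∑ i ∈ Finset.Icc 1 N, rateSlope Tf γ i) * ∑ i ∈ Finset.Icc 1 N, x.1 i := by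
        simpa [sumRate, rate] using
          sumRate_le_sumRate_add (q := 0) hTf.le hγ (fun _ _ ↦ le_rfl) hx.1.nonneg
    _ = (∑ i ∈ Finset.Icc 1 N, rateSlope Tf γ i) *
          (∑ i ∈ Finset.Icc 1 N, (x.1 i - x.2 i) + ∑ i ∈ Finset.Icc 1 N, x.2 i) := by
        rw [← Finset.sum_add_distrib]
        simp only [sub_add_cancel]
    _ ≤ _ := by gcongr

theorem bddAbove_sumRate (hN : 1 ≤ N) (hTf : 0 < Tf) (hγ : ∀ i ∈ Finset.Icc 1 N, 0 ≤ γ i) (P : ℝ) :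
    BddAbove ((fun x ↦ sumRate N Tf γ x.1) ''
      {x ∈ feasibleAllocs N Tf Emax E | externalPower N x ≤ P}) :=
  ⟨_, forall_mem_image.2 fun _ hx ↦ sumRate_le_of_externalPower_le hN hTf hγ hx.1 hx.2⟩

theorem continuousOn_maxReward_sumRate (hN : 1 ≤ N) (hTf : 0 < Tf)
    (hγ : ∀ i ∈ Finset.Icc 1 N, 0 ≤ γ i)
    (h₀ : ∃ x ∈ feasibleAllocs N Tf Emax E, externalPower N x ≤ 0) :
    ContinuousOn (maxReward (feasibleAllocs N Tf Emax E) (externalPower N)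
      fun x ↦ sumRate N Tf γ x.1) (Ici 0) := by
  have hK : 0 ≤ (∑ i ∈ Finset.Icc 1 N, rateSlope Tf γ i) * N :=
    mul_nonneg (sum_rateSlope_nonneg hTf.le hγ) N.cast_nonneg
  exact (lipschitzOnWith_maxReward (K := ⟨_, hK⟩) h₀ (bddAbove_sumRate hN hTf hγ) fun _ hx _ hQ ↦
    exists_externalPower_le_sumRate_le hN hTf.le hγ hx hQ).continuousOn

theorem exists_le_sumRate (hN : 1 ≤ N) (hTf : 0 < Tf) (hγ : ∀ i ∈ Finset.Icc 1 N, 0 < γ i)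
    (hx : x ∈ feasibleAllocs N Tf Emax E) (b : ℝ) :
    ∃ y ∈ feasibleAllocs N Tf Emax E, b ≤ sumRate N Tf γ y.1 := by
  obtain ⟨t, hbt, ht⟩ := (((tendsto_sumRate_add_atTop hN hTf hγ hx.1.nonneg).eventually_ge_atTop
    b).and (eventually_ge_atTop 0)).exists
  exact ⟨(fun i ↦ x.1 i + t, x.2),
    ⟨fun i hi ↦ ⟨(hx.1 i hi).1, le_add_of_le_of_nonneg (hx.1 i hi).2 ht⟩, hx.2⟩, hbt⟩

theorem nonempty_feasibleAllocs (hTf : 0 < Tf) (hE : ∀ i ∈ Finset.Icc 1 N, 0 ≤ E i)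
    (hEcap : ∀ i ∈ Finset.Icc 2 N, E i ≤ Emax) : (feasibleAllocs N Tf Emax E).Nonempty := by
  -- Spend every harvest in the frame in which it arrives.
  refine ⟨(fun i ↦ E i / Tf, fun i ↦ E i / Tf), fun i hi ↦ ⟨div_nonneg (hE i hi) hTf.le, le_rfl⟩,
    fun k _ ↦ ?_, fun k hk ↦ ?_⟩
  · simp only [mul_div_cancel₀ _ hTf.ne', le_refl]
  · simp only [mul_div_cancel₀ _ hTf.ne']
    rw [Finset.sum_Icc_succ_top (Nat.le_add_left 1 k), add_sub_cancel_left]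
    rw [Finset.mem_Icc] at hk
    exact hEcap _ (Finset.mem_Icc.2 (by omega))

end Allocation

theorem statement_2_general
    (N : ℕ) (hN : 1 ≤ N) (Tf : ℝ) (hTf : 0 < Tf)
    (γ E : ℕ → ℝ) (Emax : ℝ)
    (hγ : ∀ i ∈ Finset.Icc 1 N, 0 < γ i)
    (hfeas : ∃ p pH : ℕ → ℝ, Alloc N p pH ∧ Causality N Tf E pH ∧ Capacity N Tf Emax E pH)
    (f g : ℝ → ℝ)
    (hf : ∀ P : ℝ, f P = sSup {t : ℝ | ∃ p pH : ℕ → ℝ,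
      Alloc N p pH ∧ Causality N Tf E pH ∧ Capacity N Tf Emax E pH ∧
      (1 / (N : ℝ)) * ∑ i ∈ Finset.Icc 1 N, (p i - pH i) ≤ P ∧
      t = ∑ i ∈ Finset.Icc 1 N, rate Tf γ p i})
    (hg : ∀ b : ℝ, g b = sInf {v : ℝ | ∃ p pH : ℕ → ℝ,
      Alloc N p pH ∧ Causality N Tf E pH ∧ Capacity N Tf Emax E pH ∧
      b ≤ ∑ i ∈ Finset.Icc 1 N, rate Tf γ p i ∧
      v = (1 / (N : ℝ)) * ∑ i ∈ Finset.Icc 1 N, (p i - pH i)})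
    (b : ℝ) (hbf0 : f 0 ≤ b) :
    f (g b) = b := by
  obtain rfl : f = maxReward (feasibleAllocs N Tf Emax E) (externalPower N)
      fun x ↦ sumRate N Tf γ x.1 := by
    ext P
    simp only [hf, maxReward, feasibleAllocs, externalPower, sumRate, Set.image, Set.mem_ofPred_eq,
      Prod.exists, and_assoc, eq_comm]
  obtain rfl : g = minCost (feasibleAllocs N Tf Emax E) (externalPower N)
      fun x ↦ sumRate N Tf γ x.1 := by
    ext b
    simp only [hg, minCost, feasibleAllocs, externalPower, sumRate, Set.image, Set.mem_ofPred_eq,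
      Prod.exists, and_assoc, eq_comm]
  obtain ⟨p, pH, hx⟩ := hfeas
  have hγ' : ∀ i ∈ Finset.Icc 1 N, 0 ≤ γ i := fun i hi ↦ (hγ i hi).le
  have h₀ : ∃ y ∈ feasibleAllocs N Tf Emax E, externalPower N y ≤ 0 :=
    ⟨_, scaleExternal_mem_feasibleAllocs (x := (p, pH)) hx le_rfl,
      (externalPower_scaleExternal.trans (zero_mul _)).le⟩
  exact maxReward_minCost_eq (fun _ hy ↦ hy.1.externalPower_nonneg) h₀ (bddAbove_sumRate hN hTf hγ')
    (continuousOn_maxReward_sumRate hN hTf hγ' h₀) hbf0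
    (exists_le_sumRate (x := (p, pH)) hN hTf hγ hx b)

/-- for every `b ≥ f 0`, if the infimum defining `g b` and the supremum
defining `f (g b)` are attained by feasible allocations, then `f (g b) = b`. -/
theorem statement_2
    (N : ℕ) (hN : 1 ≤ N) (Tf : ℝ) (hTf : 0 < Tf)
    (γ E : ℕ → ℝ) (Emax : ℝ) (hEmax : 0 ≤ Emax)
    (hγ : ∀ i ∈ Finset.Icc 1 N, 0 < γ i)
    (hE : ∀ i ∈ Finset.Icc 1 N, 0 ≤ E i)
    (hEcap : ∀ i ∈ Finset.Icc 2 N, E i ≤ Emax)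
    (f g : ℝ → ℝ)
    (hf : ∀ P : ℝ, f P = sSup {t : ℝ | ∃ p pH : ℕ → ℝ,
      Alloc N p pH ∧ Causality N Tf E pH ∧ Capacity N Tf Emax E pH ∧
      (1 / (N : ℝ)) * ∑ i ∈ Finset.Icc 1 N, (p i - pH i) ≤ P ∧
      t = ∑ i ∈ Finset.Icc 1 N, rate Tf γ p i})
    (hg : ∀ b : ℝ, g b = sInf {v : ℝ | ∃ p pH : ℕ → ℝ,
      Alloc N p pH ∧ Causality N Tf E pH ∧ Capacity N Tf Emax E pH ∧
      b ≤ ∑ i ∈ Finset.Icc 1 N, rate Tf γ p i ∧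
      v = (1 / (N : ℝ)) * ∑ i ∈ Finset.Icc 1 N, (p i - pH i)})
    (b : ℝ) (hb : 0 ≤ b) (hbf0 : f 0 ≤ b)
    -- the infimum defining `g b` is attained by a feasible allocation
    (hattG : g b ∈ {v : ℝ | ∃ p pH : ℕ → ℝ,
      Alloc N p pH ∧ Causality N Tf E pH ∧ Capacity N Tf Emax E pH ∧
      b ≤ ∑ i ∈ Finset.Icc 1 N, rate Tf γ p i ∧
      v = (1 / (N : ℝ)) * ∑ i ∈ Finset.Icc 1 N, (p i - pH i)})
    -- the supremum defining `f (g b)` is attained by a feasible allocation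
    (hattF : f (g b) ∈ {t : ℝ | ∃ p pH : ℕ → ℝ,
      Alloc N p pH ∧ Causality N Tf E pH ∧ Capacity N Tf Emax E pH ∧
      (1 / (N : ℝ)) * ∑ i ∈ Finset.Icc 1 N, (p i - pH i) ≤ g b ∧
      t = ∑ i ∈ Finset.Icc 1 N, rate Tf γ p i}) :
    f (g b) = b := by
  obtain ⟨x, hx⟩ := nonempty_feasibleAllocs hTf hE hEcap
  exact statement_2_general N hN Tf hTf γ E Emax hγ ⟨x.1, x.2, hx⟩ f g hf hg b hbf0
end

section
/- Suppose there is no harvested energy (E_i = 0 for all i, so Causality forces p_{H,i} = 0 and the problem is to minimize the total energy Σ_{i=1}^N T_f·p_i over p ∈ ℝ^N with p_i ≥ 0 satisfying the Data constraints). If p* is a minimizer of this problem, then there exist water levels 0 ≤ ν_1 ≤ ν_2 ≤ … ≤ ν_N such that p*_i = max(ν_i − 1/γ_i, 0) for every i, and for every k ∈ {1,…,N−1}: if ν_k < ν_{k+1}, then the cumulative data constraint is tight at k, i.e. Σ_{i=1}^k (T_f/2)·log₂(1 + γ_i p*_i) = Σ_{i=1}^k B_i. -/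
/-- Data constraints: `Σ_{i=k}^N rate_i ≥ Σ_{i=k}^N B_i` for `k = 1, …, N`. -/
def DataC (N : ℕ) (Tf : ℝ) (γ B p : ℕ → ℝ) : Prop :=
  ∀ k ∈ Finset.Icc 1 N, ∑ i ∈ Finset.Icc k N, B i ≤ ∑ i ∈ Finset.Icc k N, rate Tf γ p i

/-!
Write `u i = p i + 1 / γ i` for the level of frame `i`; its rate is `(Tf / 2) log₂ (γ i * u i)`, so
multiplying the level by `t` adds `(Tf / 2) log₂ t` whatever the frame. Hence a small amount of rate
can be moved from an active frame `j` to a frame `i` by scaling the two levels by `1 / t` and `t`,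
and for `t` slightly above `1` this saves energy as soon as `u i < u j`. At an optimum the move must
be blocked by a data constraint that is tight at some `m` with `i < m ≤ j`. No constraint can block
a move to a later frame, so the level of an active frame is at most every later level, and
`ν k = min {u j | k ≤ j ≤ N}` works as water level.

If the data constraint at `k + 1` is slack, some frame `j > k` carries more rate than its own data,
hence is active, and the first such `j` has only slack constraints between `k + 1` and `j`. If also
`ν k < ν (k + 1)`, then `u k = ν k < u j`, and moving rate from `j` to `k` would save energy, a
contradiction. In the same way the constraint at `1` is tight, since otherwise some frame could
simply lower its power; the tail constraints at `1` and `k + 1` together give tightness at `k`.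
-/

open Finset Filter Topology

theorem exists_pos_forall_sum_Icc_pos {M : Type*} [AddCommMonoid M] [LinearOrder M]
    [IsOrderedAddMonoid M] {f : ℕ → M} {k N : ℕ} (h : 0 < ∑ i ∈ Icc k N, f i) :
    ∃ j ∈ Icc k N, 0 < f j ∧ ∀ m ∈ Icc k j, 0 < ∑ i ∈ Icc m N, f i := by
  have hkN : k ≤ N := by
    by_contra hNk
    simp [Icc_eq_empty hNk] at h
  induction hkN using Nat.decreasingInduction with
  | self => exact ⟨N, by simp, by simpa using h, fun m hm ↦ by simp_all⟩
  | of_succ k hkN ih =>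
    by_cases hk : 0 < f k
    · refine ⟨k, mem_Icc.2 ⟨le_rfl, hkN.le⟩, hk, fun m hm ↦ ?_⟩
      rwa [le_antisymm (mem_Icc.1 hm).2 (mem_Icc.1 hm).1]
    · have hsucc : 0 < ∑ i ∈ Icc (k + 1) N, f i := by
        rw [← insert_Icc_add_one_left_eq_Icc hkN.le, sum_insert (by simp)] at h
        exact h.trans_le (add_le_of_nonpos_left (not_lt.1 hk))
      obtain ⟨j, hj, hfj, htail⟩ := ih hsucc
      refine ⟨j, Icc_subset_Icc_left k.le_succ hj, hfj, fun m hm ↦ ?_⟩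
      obtain rfl | hkm := (mem_Icc.1 hm).1.eq_or_lt
      · exact h
      · exact htail m (mem_Icc.2 ⟨hkm, (mem_Icc.1 hm).2⟩)

theorem sum_Icc_add_sum_Icc_succ {M : Type*} [AddCommMonoid M] (f : ℕ → M) {a k N : ℕ}
    (hak : a ≤ k) (hkN : k ≤ N) :
    ∑ i ∈ Icc a k, f i + ∑ i ∈ Icc (k + 1) N, f i = ∑ i ∈ Icc a N, f i := by
  simp only [← Ico_add_one_right_eq_Icc]
  exact sum_Ico_consecutive f (by lia) (by lia)

section TailMin

variable {α : Type*} [ConditionallyCompleteLinearOrder α] {u : ℕ → α} {N k j : ℕ}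

/-- The minimum of `u k, …, u N`, from which the water levels are formed. The infimum is attained
when `k ≤ N`; for `N < k` it is a junk value. -/
noncomputable def tailMin (u : ℕ → α) (N k : ℕ) : α :=
  sInf (u '' Set.Icc k N)

theorem tailMin_le (hj : j ∈ Icc k N) : tailMin u N k ≤ u j :=
  csInf_le ((Set.finite_Icc k N).image u).bddBelow ⟨j, mem_Icc.1 hj, rfl⟩

theorem exists_eq_tailMin (hkN : k ≤ N) : ∃ j ∈ Icc k N, u j = tailMin u N k := by
  obtain ⟨j, hj, hju⟩ :=
    ((Set.nonempty_Icc.2 hkN).image u).csInf_mem ((Set.finite_Icc k N).image u)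
  exact ⟨j, mem_Icc.2 hj, hju⟩

theorem tailMin_le_tailMin_succ (hkN : k + 1 ≤ N) : tailMin u N k ≤ tailMin u N (k + 1) := by
  obtain ⟨j, hj, hju⟩ := exists_eq_tailMin (u := u) hkN
  exact hju ▸ tailMin_le (Icc_subset_Icc_left k.le_succ hj)

theorem eq_tailMin_of_tailMin_lt_succ (hkN : k ≤ N) (hlt : tailMin u N k < tailMin u N (k + 1)) :
    u k = tailMin u N k := by
  obtain ⟨j, hj, hju⟩ := exists_eq_tailMin (u := u) hkN
  obtain rfl | hkj := (mem_Icc.1 hj).1.eq_or_lt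
  · exact hju
  · exact absurd (tailMin_le (mem_Icc.2 ⟨hkj, (mem_Icc.1 hj).2⟩)) (hju ▸ hlt).not_ge

end TailMin

theorem eventually_forall_mul_logb_le {ι : Type*} {s : Finset ι} {f : ι → ℝ} (b c : ℝ)
    (hf : ∀ m ∈ s, 0 < f m) : ∀ᶠ t in 𝓝 1, ∀ m ∈ s, c * Real.logb b t ≤ f m := by
  have hlevel_im : Tendsto (fun t ↦ c * Real.logb b t) (𝓝 1) (𝓝 0) := by
    have hcont : ContinuousAt (fun t ↦ c * (Real.log t / Real.log b)) 1 :=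
      ((Real.continuousAt_log one_ne_zero).div_const _).const_mul c
    simpa [ContinuousAt, Real.logb] using hcont
  exact (eventually_all_finset s).2 fun m hm ↦ hlevel_im.eventually_le_const (hf m hm)

section Allocations

variable {N i j k m : ℕ} {Tf t : ℝ} {γ B p : ℕ → ℝ}

/-- The total energy `Σ_{i=1}^N Tf * p i`, the objective of the problem. -/
def energy (N : ℕ) (Tf : ℝ) (p : ℕ → ℝ) : ℝ :=
  ∑ i ∈ Icc 1 N, Tf * p i

/-- The feasible power allocations. Entries outside `1, …, N` are unconstrained. -/
def feasibleSet (N : ℕ) (Tf : ℝ) (γ B : ℕ → ℝ) : Set (ℕ → ℝ) :=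
  {p | (∀ i ∈ Icc 1 N, 0 ≤ p i) ∧ DataC N Tf γ B p}

/-- The slack `Σ_{i=k}^N (rate i - B i)` in the data constraint at `k`, nonnegative for feasible
allocations and zero when that constraint is tight. -/
noncomputable def slack (N : ℕ) (Tf : ℝ) (γ B p : ℕ → ℝ) (k : ℕ) : ℝ :=
  ∑ i ∈ Icc k N, (rate Tf γ p i - B i)

/-- The level reached in frame `i` when the power `p i` is poured over the noise floor `1 / γ i`:
the water level of the frame if it is active, the floor otherwise. -/
noncomputable def level (γ p : ℕ → ℝ) (i : ℕ) : ℝ :=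
  p i + 1 / γ i

/-- The allocation in which the level of frame `i` has been multiplied by `t`, all other powers
being kept; this is the perturbation of an optimum used in the exchange argument. -/
noncomputable def scaleLevel (γ p : ℕ → ℝ) (i : ℕ) (t : ℝ) : ℕ → ℝ :=
  p + Pi.single i ((t - 1) * level γ p i)

theorem mem_feasibleSet_iff_slack_nonneg :
    p ∈ feasibleSet N Tf γ B ↔
      (∀ i ∈ Icc 1 N, 0 ≤ p i) ∧ ∀ k ∈ Icc 1 N, 0 ≤ slack N Tf γ B p k := by
  simp only [feasibleSet, DataC, slack, Set.mem_ofPred_eq, sum_sub_distrib, sub_nonneg]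

theorem level_pos (hγ : 0 < γ i) (hp : 0 ≤ p i) : 0 < level γ p i := by
  unfold level
  positivity

theorem rate_eq_logb_level (hγ : γ i ≠ 0) :
    rate Tf γ p i = Tf / 2 * Real.logb 2 (γ i * level γ p i) := by
  rw [rate, level, mul_add, mul_one_div_cancel hγ, add_comm]

theorem pos_of_rate_pos (hp : 0 ≤ p i) (hrate : 0 < rate Tf γ p i) : 0 < p i := by
  refine hp.lt_of_ne fun h ↦ hrate.ne' ?_
  simp [rate, ← h]

theorem scaleLevel_of_ne (h : j ≠ i) : scaleLevel γ p i t j = p j := by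
  simp [scaleLevel, h]

theorem level_scaleLevel_self : level γ (scaleLevel γ p i t) i = t * level γ p i := by
  simp only [level, scaleLevel, Pi.add_apply, Pi.single_eq_same]
  ring

theorem level_scaleLevel_of_ne (h : j ≠ i) : level γ (scaleLevel γ p i t) j = level γ p j := by
  rw [level, scaleLevel_of_ne h, level]

theorem rate_scaleLevel (hγ : γ i ≠ 0) (hlevel : level γ p i ≠ 0) (ht : t ≠ 0) :
    rate Tf γ (scaleLevel γ p i t) = rate Tf γ p + Pi.single i (Tf / 2 * Real.logb 2 t) := by
  ext m
  obtain rfl | hmi := eq_or_ne m i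
  · rw [Pi.add_apply, Pi.single_eq_same, rate_eq_logb_level hγ, rate_eq_logb_level hγ,
      level_scaleLevel_self, mul_left_comm, Real.logb_mul ht (mul_ne_zero hγ hlevel)]
    ring
  · simp [rate, scaleLevel_of_ne hmi, hmi]

theorem slack_scaleLevel (hγ : γ i ≠ 0) (hlevel : level γ p i ≠ 0) (ht : t ≠ 0) (hi : i ≤ N) :
    slack N Tf γ B (scaleLevel γ p i t) k =
      slack N Tf γ B p k + if k ≤ i then Tf / 2 * Real.logb 2 t else 0 := by
  simp only [slack, rate_scaleLevel hγ hlevel ht, Pi.add_apply, add_sub_right_comm,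
    sum_add_distrib, sum_pi_single', mem_Icc, hi, and_true]

theorem energy_scaleLevel (hi : i ∈ Icc 1 N) :
    energy N Tf (scaleLevel γ p i t) = energy N Tf p + Tf * ((t - 1) * level γ p i) := by
  simp only [energy, ← mul_sum, scaleLevel, Pi.add_apply, sum_add_distrib, sum_pi_single',
    if_pos hi, mul_add]

theorem scaleLevel_nonneg (hp : ∀ m ∈ Icc 1 N, 0 ≤ p m) (hi : 0 ≤ scaleLevel γ p i t i) :
    ∀ m ∈ Icc 1 N, 0 ≤ scaleLevel γ p i t m := by
  intro m hm
  obtain rfl | hmi := eq_or_ne m i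
  · exact hi
  · exact (scaleLevel_of_ne hmi).symm ▸ hp m hm

theorem eventually_scaleLevel_inv_nonneg (hp : 0 < p j) :
    ∀ᶠ t in 𝓝 1, 0 ≤ scaleLevel γ p j t⁻¹ j := by
  have hcont : ContinuousAt (fun t : ℝ ↦ p j + (t⁻¹ - 1) * level γ p j) 1 :=
    (((continuousAt_inv₀ one_ne_zero).sub_const 1).mul_const _).const_add _
  filter_upwards [hcont.eventually_const_le (by simpa using hp)] with t ht
  simpa [scaleLevel] using ht

theorem scaleLevel_inv_mem_feasibleSet (hj : j ∈ Icc 1 N) (hγ : 0 < γ j)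
    (hp : p ∈ feasibleSet N Tf γ B) (ht : 0 < t) (hpos : 0 ≤ scaleLevel γ p j t⁻¹ j)
    (hslack : ∀ m ∈ Icc 1 j, Tf / 2 * Real.logb 2 t ≤ slack N Tf γ B p m) :
    scaleLevel γ p j t⁻¹ ∈ feasibleSet N Tf γ B := by
  rw [mem_feasibleSet_iff_slack_nonneg] at hp ⊢
  refine ⟨scaleLevel_nonneg hp.1 hpos, fun k hk ↦ ?_⟩
  rw [slack_scaleLevel hγ.ne' (level_pos hγ (hp.1 j hj)).ne' (inv_ne_zero ht.ne')
    (mem_Icc.1 hj).2, Real.logb_inv]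
  split_ifs with hkj
  · linarith [hslack k (mem_Icc.2 ⟨(mem_Icc.1 hk).1, hkj⟩)]
  · simpa using hp.2 k hk

theorem scaleLevel_scaleLevel_mem_feasibleSet (hTf : 0 ≤ Tf) (hi : i ∈ Icc 1 N)
    (hj : j ∈ Icc 1 N) (hij : i ≠ j) (hγi : 0 < γ i) (hγj : 0 < γ j)
    (hp : p ∈ feasibleSet N Tf γ B) (ht : 1 ≤ t) (hpos : 0 ≤ scaleLevel γ p j t⁻¹ j)
    (hslack : ∀ m ∈ Ioc i j, Tf / 2 * Real.logb 2 t ≤ slack N Tf γ B p m) :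
    scaleLevel γ (scaleLevel γ p i t) j t⁻¹ ∈ feasibleSet N Tf γ B := by
  rw [mem_feasibleSet_iff_slack_nonneg] at hp ⊢
  have ht0 : t ≠ 0 := (zero_lt_one.trans_le ht).ne'
  have hlevel_i := level_pos hγi (hp.1 i hi)
  refine ⟨scaleLevel_nonneg (scaleLevel_nonneg hp.1 ?_) ?_, fun k hk ↦ ?_⟩
  · have := mul_nonneg (sub_nonneg.2 ht) hlevel_i.le
    simpa [scaleLevel] using add_nonneg (hp.1 i hi) this
  · simpa [scaleLevel, level, hij.symm] using hpos
  · have hrate : 0 ≤ Tf / 2 * Real.logb 2 t :=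
      mul_nonneg (by linarith) (Real.logb_nonneg one_lt_two ht)
    have hk0 := hp.2 k hk
    have hlevel_j : level γ (scaleLevel γ p i t) j ≠ 0 := by
      rw [level_scaleLevel_of_ne hij.symm]
      exact (level_pos hγj (hp.1 j hj)).ne'
    rw [slack_scaleLevel hγj.ne' hlevel_j (inv_ne_zero ht0) (mem_Icc.1 hj).2,
      slack_scaleLevel hγi.ne' hlevel_i.ne' ht0 (mem_Icc.1 hi).2, Real.logb_inv]
    split_ifs with hki hkj hkj
    · linarith
    · linarith
    · linarith [hslack k (mem_Ioc.2 ⟨not_le.1 hki, hkj⟩)]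
    · linarith

theorem exists_mem_Icc_slack_eq_zero_of_pos (hTf : 0 < Tf) (hγ : ∀ i ∈ Icc 1 N, 0 < γ i)
    (hp : p ∈ feasibleSet N Tf γ B) (hmin : IsMinOn (energy N Tf) (feasibleSet N Tf γ B) p)
    (hj : j ∈ Icc 1 N) (hpj : 0 < p j) : ∃ m ∈ Icc 1 j, slack N Tf γ B p m = 0 := by
  by_contra! hne
  have hslack : ∀ m ∈ Icc 1 j, 0 < slack N Tf γ B p m := fun m hm ↦
    ((mem_feasibleSet_iff_slack_nonneg.1 hp).2 m
      (Icc_subset_Icc_right (mem_Icc.1 hj).2 hm)).lt_of_ne' (hne m hm)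
  have hnear : ∀ᶠ t in 𝓝[>] (1 : ℝ), 0 ≤ scaleLevel γ p j t⁻¹ j ∧
      ∀ m ∈ Icc 1 j, Tf / 2 * Real.logb 2 t ≤ slack N Tf γ B p m :=
    nhdsWithin_le_nhds <| (eventually_scaleLevel_inv_nonneg hpj).and <|
      eventually_forall_mul_logb_le 2 (Tf / 2) hslack
  obtain ⟨t, ⟨hpos, hrate⟩, ht⟩ := (hnear.and self_mem_nhdsWithin).exists
  have hle := hmin <|
    scaleLevel_inv_mem_feasibleSet hj (hγ j hj) hp (zero_lt_one.trans ht) hpos hrate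
  have hsaved : (t⁻¹ - 1) * level γ p j < 0 :=
    mul_neg_of_neg_of_pos (sub_neg.2 (inv_lt_one_of_one_lt₀ ht)) (level_pos (hγ j hj) hpj.le)
  rw [Set.mem_ofPred_eq, energy_scaleLevel hj] at hle
  linarith [mul_neg_of_pos_of_neg hTf hsaved]

theorem exists_mem_Ioc_slack_eq_zero_of_level_lt (hTf : 0 < Tf) (hγ : ∀ i ∈ Icc 1 N, 0 < γ i)
    (hp : p ∈ feasibleSet N Tf γ B) (hmin : IsMinOn (energy N Tf) (feasibleSet N Tf γ B) p)
    (hi : i ∈ Icc 1 N) (hj : j ∈ Icc 1 N) (hpj : 0 < p j) (hlt : level γ p i < level γ p j) :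
    ∃ m ∈ Ioc i j, slack N Tf γ B p m = 0 := by
  by_contra! hne
  have hij : i ≠ j := fun h ↦ hlt.ne (h ▸ rfl)
  have hslack : ∀ m ∈ Ioc i j, 0 < slack N Tf γ B p m := fun m hm ↦
    ((mem_feasibleSet_iff_slack_nonneg.1 hp).2 m (by grind)).lt_of_ne' (hne m hm)
  have hnear : ∀ᶠ t in 𝓝[>] (1 : ℝ), 0 ≤ scaleLevel γ p j t⁻¹ j ∧
      (∀ m ∈ Ioc i j, Tf / 2 * Real.logb 2 t ≤ slack N Tf γ B p m) ∧
      t * level γ p i < level γ p j :=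
    nhdsWithin_le_nhds <| (eventually_scaleLevel_inv_nonneg hpj).and <|
      (eventually_forall_mul_logb_le 2 (Tf / 2) hslack).and <|
      (continuous_mul_const _).continuousAt.eventually_lt_const (by simpa using hlt)
  obtain ⟨t, ⟨hpos, hrate, hgain⟩, ht⟩ := (hnear.and self_mem_nhdsWithin).exists
  have hle := hmin (scaleLevel_scaleLevel_mem_feasibleSet hTf.le hi hj hij (hγ i hi) (hγ j hj) hp
    ht.le hpos hrate)
  have hsaved : (t - 1) * level γ p i + (t⁻¹ - 1) * level γ p j < 0 := by
    have ht0 : 0 < t := zero_lt_one.trans ht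
    calc (t - 1) * level γ p i + (t⁻¹ - 1) * level γ p j
        = (t - 1) * t⁻¹ * (t * level γ p i - level γ p j) := by field_simp; ring
      _ < 0 := mul_neg_of_pos_of_neg (mul_pos (sub_pos.2 ht) (inv_pos.2 ht0)) (sub_neg.2 hgain)
  rw [Set.mem_ofPred_eq, energy_scaleLevel hj, energy_scaleLevel hi,
    level_scaleLevel_of_ne hij.symm] at hle
  linarith [mul_neg_of_pos_of_neg hTf hsaved]

theorem level_le_level_of_pos (hTf : 0 < Tf) (hγ : ∀ i ∈ Icc 1 N, 0 < γ i)
    (hp : p ∈ feasibleSet N Tf γ B) (hmin : IsMinOn (energy N Tf) (feasibleSet N Tf γ B) p)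
    (hi : i ∈ Icc 1 N) (hpi : 0 < p i) (hj : j ∈ Icc i N) : level γ p i ≤ level γ p j := by
  by_contra! hlt
  have hj1 : j ∈ Icc 1 N := Icc_subset_Icc_left (mem_Icc.1 hi).1 hj
  obtain ⟨m, hm, -⟩ := exists_mem_Ioc_slack_eq_zero_of_level_lt hTf hγ hp hmin hj1 hi hpi hlt
  rw [Ioc_eq_empty (mem_Icc.1 hj).1.not_gt] at hm
  exact notMem_empty m hm

theorem exists_pos_forall_slack_pos (hB : ∀ i ∈ Icc k N, 0 ≤ B i) (hp : ∀ i ∈ Icc k N, 0 ≤ p i)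
    (hk : 0 < slack N Tf γ B p k) :
    ∃ j ∈ Icc k N, 0 < p j ∧ ∀ m ∈ Icc k j, 0 < slack N Tf γ B p m := by
  obtain ⟨j, hj, hrate, hslack⟩ := exists_pos_forall_sum_Icc_pos hk
  exact ⟨j, hj, pos_of_rate_pos (hp j hj) ((hB j hj).trans_lt (sub_pos.1 hrate)), hslack⟩

theorem slack_one_eq_zero (hTf : 0 < Tf) (hγ : ∀ i ∈ Icc 1 N, 0 < γ i)
    (hB : ∀ i ∈ Icc 1 N, 0 ≤ B i) (hp : p ∈ feasibleSet N Tf γ B)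
    (hmin : IsMinOn (energy N Tf) (feasibleSet N Tf γ B) p) (hN : 1 ≤ N) :
    slack N Tf γ B p 1 = 0 := by
  obtain ⟨hp0, hslack⟩ := mem_feasibleSet_iff_slack_nonneg.1 hp
  by_contra hne
  have hpos := (hslack 1 (left_mem_Icc.2 hN)).lt_of_ne' hne
  obtain ⟨j, hj, hpj, hslack_pos⟩ := exists_pos_forall_slack_pos hB hp0 hpos
  obtain ⟨m, hm, hm0⟩ := exists_mem_Icc_slack_eq_zero_of_pos hTf hγ hp hmin hj hpj
  exact (hslack_pos m hm).ne' hm0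

theorem slack_succ_eq_zero_of_tailMin_lt (hTf : 0 < Tf) (hγ : ∀ i ∈ Icc 1 N, 0 < γ i)
    (hB : ∀ i ∈ Icc 1 N, 0 ≤ B i) (hp : p ∈ feasibleSet N Tf γ B)
    (hmin : IsMinOn (energy N Tf) (feasibleSet N Tf γ B) p) (hk : 1 ≤ k) (hkN : k + 1 ≤ N)
    (hlt : tailMin (level γ p) N k < tailMin (level γ p) N (k + 1)) :
    slack N Tf γ B p (k + 1) = 0 := by
  obtain ⟨hp0, hslack⟩ := mem_feasibleSet_iff_slack_nonneg.1 hp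
  have hsub : Icc (k + 1) N ⊆ Icc 1 N := Icc_subset_Icc_left (by lia)
  by_contra hne
  have hpos := (hslack (k + 1) (hsub (left_mem_Icc.2 hkN))).lt_of_ne' hne
  obtain ⟨j, hj, hpj, hslack_pos⟩ :=
    exists_pos_forall_slack_pos (fun i hi ↦ hB i (hsub hi)) (fun i hi ↦ hp0 i (hsub hi)) hpos
  have hlevel : level γ p k < level γ p j :=
    (eq_tailMin_of_tailMin_lt_succ (by lia) hlt).trans_lt (hlt.trans_le (tailMin_le hj))
  obtain ⟨m, hm, hm0⟩ := exists_mem_Ioc_slack_eq_zero_of_level_lt hTf hγ hp hmin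
    (mem_Icc.2 ⟨hk, by lia⟩) (hsub hj) hpj hlevel
  exact (hslack_pos m (Icc_add_one_left_eq_Ioc k j ▸ hm)).ne' hm0

theorem sum_rate_eq_sum_of_slack_eq_zero (hk : 1 ≤ k) (hkN : k ≤ N)
    (hone : slack N Tf γ B p 1 = 0) (hsucc : slack N Tf γ B p (k + 1) = 0) :
    ∑ i ∈ Icc 1 k, rate Tf γ p i = ∑ i ∈ Icc 1 k, B i := by
  have hsplit : ∑ i ∈ Icc 1 k, (rate Tf γ p i - B i) + slack N Tf γ B p (k + 1) =
      slack N Tf γ B p 1 := sum_Icc_add_sum_Icc_succ _ hk hkN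
  rw [hone, hsucc, add_zero, sum_sub_distrib] at hsplit
  exact sub_eq_zero.1 hsplit

theorem tailMin_level_pos (hγ : ∀ i ∈ Icc k N, 0 < γ i) (hp : ∀ i ∈ Icc k N, 0 ≤ p i)
    (hkN : k ≤ N) : 0 < tailMin (level γ p) N k := by
  obtain ⟨j, hj, hju⟩ := exists_eq_tailMin (u := level γ p) hkN
  exact hju ▸ level_pos (hγ j hj) (hp j hj)

theorem eq_max_tailMin_level_sub (hTf : 0 < Tf) (hγ : ∀ i ∈ Icc 1 N, 0 < γ i)
    (hp : p ∈ feasibleSet N Tf γ B) (hmin : IsMinOn (energy N Tf) (feasibleSet N Tf γ B) p)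
    (hi : i ∈ Icc 1 N) : p i = max (tailMin (level γ p) N i - 1 / γ i) 0 := by
  have hiN : i ≤ N := (mem_Icc.1 hi).2
  have hle : tailMin (level γ p) N i ≤ p i + 1 / γ i := tailMin_le (left_mem_Icc.2 hiN)
  obtain hpi | hpi := (hp.1 i hi).eq_or_lt
  · rw [max_eq_right] <;> linarith
  · obtain ⟨j, hj, hju⟩ := exists_eq_tailMin (u := level γ p) hiN
    have hge : p i + 1 / γ i ≤ tailMin (level γ p) N i :=
      hju ▸ level_le_level_of_pos hTf hγ hp hmin hi hpi hj
    rw [max_eq_left] <;> linarith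

end Allocations

/-- grid power only, Proposition 2: if `p*` minimizes the total energy
`Σ_{i=1}^N T_f p_i` over nonnegative `p` satisfying the data constraints, then `p*`
is given by nonnegative, monotonically non-decreasing water levels
`ν_1 ≤ ν_2 ≤ … ≤ ν_N` via `p*_i = [ν_i − 1/γ_i]⁺`, and the water level can increase
from frame `k` to `k+1` only if the cumulative data constraint is tight at `k`. -/
theorem statement_7
    (N : ℕ) (hN : 1 ≤ N) (Tf : ℝ) (hTf : 0 < Tf)
    (γ B : ℕ → ℝ)
    (hγ : ∀ i ∈ Finset.Icc 1 N, 0 < γ i)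
    (hB : ∀ i ∈ Finset.Icc 1 N, 0 ≤ B i)
    (pstar : ℕ → ℝ)
    (hfeas : (∀ i ∈ Finset.Icc 1 N, 0 ≤ pstar i) ∧ DataC N Tf γ B pstar)
    (hopt : ∀ p : ℕ → ℝ, (∀ i ∈ Finset.Icc 1 N, 0 ≤ p i) → DataC N Tf γ B p →
      ∑ i ∈ Finset.Icc 1 N, Tf * pstar i ≤ ∑ i ∈ Finset.Icc 1 N, Tf * p i) :
    ∃ ν : ℕ → ℝ,
      (∀ k ∈ Finset.Icc 1 N, 0 ≤ ν k) ∧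
      (∀ k ∈ Finset.Icc 1 (N - 1), ν k ≤ ν (k + 1)) ∧
      (∀ i ∈ Finset.Icc 1 N, pstar i = max (ν i - 1 / γ i) 0) ∧
      (∀ k ∈ Finset.Icc 1 (N - 1), ν k < ν (k + 1) →
        ∑ i ∈ Finset.Icc 1 k, rate Tf γ pstar i = ∑ i ∈ Finset.Icc 1 k, B i) := by
  have hmin : IsMinOn (energy N Tf) (feasibleSet N Tf γ B) pstar :=
    isMinOn_iff.2 fun p hp ↦ hopt p hp.1 hp.2
  refine ⟨tailMin (level γ pstar) N, fun k hk ↦ ?_, fun k hk ↦ ?_,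
    fun i hi ↦ eq_max_tailMin_level_sub hTf hγ hfeas hmin hi, fun k hk hlt ↦ ?_⟩
  · have hsub : Icc k N ⊆ Icc 1 N := Icc_subset_Icc_left (mem_Icc.1 hk).1
    exact (tailMin_level_pos (fun i hi ↦ hγ i (hsub hi)) (fun i hi ↦ hfeas.1 i (hsub hi))
      (mem_Icc.1 hk).2).le
  · exact tailMin_le_tailMin_succ (by grind)
  · obtain ⟨hk1, hkN⟩ := mem_Icc.1 hk
    exact sum_rate_eq_sum_of_slack_eq_zero hk1 (by lia)
      (slack_one_eq_zero hTf hγ hB hfeas hmin hN)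
      (slack_succ_eq_zero_of_tailMin_lt hTf hγ hB hfeas hmin hk1 (by lia) hlt)
end
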